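/- arXiv:math/0301347 — 2 statements merged into one kernel-verified Lean document; each statement's English description precedes it below -/
import Mathlib

section
/- Let A be a ring and M an A-generator such that End_A(M) is a right noetherian ring of finite global dimension d. If Ext^i_A(M,M) = 0 for i = 1, …, d−1, then M is a finite projective A-module and A has global dimension equal to d. -/
open CategoryTheory MulOpposite

attribute [local instance] HasDerivedCategory.standard
attribute [local instance] CategoryTheory.hasExt_of_hasDerivedCategory

set_option maxHeartbeats 1000000
set_option synthInstance.maxHeartbeats 400000

noncomputable section
namespace MoritaHochschild

/-! ### Generators and finite projectives -/

/-- A right `R`-module `X` is a generator if `R` is a direct summand of a finite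
direct sum of copies of `X`. -/
def IsRGenerator (R : Type) [Ring R] (X : Type) [AddCommGroup X] [Module Rᵐᵒᵖ X] : Prop :=
  ∃ (k : ℕ) (p : (Fin k → X) →ₗ[Rᵐᵒᵖ] R) (s : R →ₗ[Rᵐᵒᵖ] (Fin k → X)),
    p.comp s = LinearMap.id

/-- A left `R`-module `X` is a generator if `R` is a direct summand of a finite
direct sum of copies of `X`. -/
def IsLGenerator (R : Type) [Ring R] (X : Type) [AddCommGroup X] [Module R X] : Prop :=
  ∃ (k : ℕ) (p : (Fin k → X) →ₗ[R] R) (s : R →ₗ[R] (Fin k → X)),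
    p.comp s = LinearMap.id


/-- The (right) global dimension of `R` is at most `d`:
all Ext-groups of right `R`-modules vanish in degrees above `d`. -/
def globalDimLE (R : Type) [Ring R] (d : ℕ) : Prop :=
  ∀ (X Y : ModuleCat.{0} Rᵐᵒᵖ) (i : ℕ), d < i → Subsingleton (Abelian.Ext X Y i)

/-- The (right) global dimension of a ring, as an element of `ℕ∞`. -/
def globalDim (R : Type) [Ring R] : ℕ∞ :=
  sInf {i : ℕ∞ | ∃ d : ℕ, i = d ∧ globalDimLE R d}

/-!
Let `G` be the module `M` and let `S = End(G)`. Since `G` is a separator, the Gabriel–Popescu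
theorem says that `Hom(G, -)` is a fully faithful functor to right `S`-modules with an exact left
adjoint, `- ⊗ G`.

Every epimorphism `p : Gⁿ ⟶ G` splits. Its kernel `K` has `Hom(G, K)` of projective dimension at
most `d - 2`, because `Hom(G, K)` is the kernel of a map between the projective modules
`Hom(G, Gⁿ)` and `Hom(G, G)`. As `S` is noetherian, `K` has a resolution by powers of `G`, of length
at most `d - 2`, that stays exact under `Hom(G, -)`; dimension shifting along it gives
`Ext¹(G, K) = 0`. If `d ≤ 1`, then already the inclusion of `K` splits.

Consequently a right ideal of `S` whose members are jointly epic is all of `S`, for finitely many of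
its members form an epimorphism `Gⁿ ⟶ G`, and a section of it expresses `1` through them. Applied to
the annihilator of an element of a module `N` with `N ⊗ G = 0`, this shows that `- ⊗ G` kills no
nonzero module, hence that `Hom(G, -)` is an equivalence. Applied to the ideal of endomorphisms that
factor through a finite projective module, it shows that the identity of `M` so factors.
-/

open Limits
attribute [local instance] Abelian.hasFiniteBiproducts
universe w v v' u u'

section Kernels
variable {C : Type u} [Category.{v} C] [Abelian C]

lemma shortExact_kernel {X Y : C} (p : X ⟶ Y) [Epi p] :
    (ShortComplex.mk (kernel.ι p) p (kernel.condition p)).ShortExact where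
  exact := ShortComplex.exact_kernel p

lemma shortExact_kernel_image {X Y : C} (f : X ⟶ Y) :
    (ShortComplex.mk (kernel.ι f) (Abelian.factorThruImage f)
      ((cancel_mono (Abelian.image.ι f)).1 (by simp))).ShortExact where
  exact := by
    let φ : ShortComplex.mk (kernel.ι f) (Abelian.factorThruImage f)
        ((cancel_mono (Abelian.image.ι f)).1 (by simp)) ⟶
        ShortComplex.mk (kernel.ι f) f (kernel.condition f) :=
      { τ₁ := 𝟙 _, τ₂ := 𝟙 _, τ₃ := Abelian.image.ι f }
    exact (ShortComplex.exact_iff_of_epi_of_isIso_of_mono φ).2 (ShortComplex.exact_kernel f)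

lemma hasProjectiveDimensionLE_image {X Y : C} (f : X ⟶ Y) [hY : Projective Y] (n : ℕ)
    [h : HasProjectiveDimensionLE (cokernel f) (n + 1)] :
    HasProjectiveDimensionLE (Abelian.image f) n :=
  ((shortExact_kernel (cokernel.π f)).hasProjectiveDimensionLT_X₃_iff n hY).1 h

lemma hasProjectiveDimensionLE_kernel {X Y : C} (f : X ⟶ Y) [hX : Projective X] [Projective Y]
    (n : ℕ) [HasProjectiveDimensionLE (cokernel f) (n + 2)] :
    HasProjectiveDimensionLE (kernel f) n :=
  ((shortExact_kernel_image f).hasProjectiveDimensionLT_X₃_iff n hX).1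
    (hasProjectiveDimensionLE_image f (n + 1))

lemma isSplitMono_kernel_ι {X Y : C} (f : X ⟶ Y) [Projective Y]
    [HasProjectiveDimensionLE (cokernel f) 1] : IsSplitMono (kernel.ι f) := by
  have : Projective (Abelian.image f) :=
    (projective_iff_hasProjectiveDimensionLE_zero _).2 (hasProjectiveDimensionLE_image f 0)
  exact (shortExact_kernel_image f).splittingOfProjective.isSplitMono_f

lemma isSplitEpi_of_isSplitMono_kernel_ι {X Y : C} (p : X ⟶ Y) [Epi p]
    [IsSplitMono (kernel.ι p)] : IsSplitEpi p :=
  (ShortComplex.Splitting.ofExactOfRetraction _ (shortExact_kernel p).exact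
    (retraction (kernel.ι p)) (IsSplitMono.id _) ‹_›).isSplitEpi_g

variable {D : Type u'} [Category.{v'} D] [Abelian D] (F : C ⥤ D) [F.PreservesZeroMorphisms]
  [PreservesFiniteLimits F]

lemma hasProjectiveDimensionLE_map_kernel {X Y : C} (f : X ⟶ Y) [Projective (F.obj X)]
    [Projective (F.obj Y)] {n : ℕ} (_ : HasProjectiveDimensionLE (cokernel (F.map f)) (n + 2)) :
    HasProjectiveDimensionLE (F.obj (kernel f)) n :=
  have := hasProjectiveDimensionLE_kernel (F.map f) n
  hasProjectiveDimensionLT_of_iso (PreservesKernel.iso F f).symm _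

lemma isSplitMono_kernel_ι_of_map [F.Full] [F.Faithful] {X Y : C} (f : X ⟶ Y)
    [Projective (F.obj Y)] (_ : HasProjectiveDimensionLE (cokernel (F.map f)) 1) :
    IsSplitMono (kernel.ι f) := by
  have := isSplitMono_kernel_ι (F.map f)
  rw [← F.isSplitMono_iff, ← kernelComparison_comp_ι]
  infer_instance

end Kernels

section HomFunctor
variable {C : Type u} [Category.{v} C] [Preadditive C] (G : C)

instance projective_preadditiveCoyonedaObj_obj_self :
    Projective ((preadditiveCoyonedaObj G).obj G) :=
  (IsProjective.iff_projective _).1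
    (Module.Projective.of_equiv (Preadditive.homSelfLinearEquivEndMulOpposite G).symm)

/-- Post-composition with `p`, the linear map underlying `(preadditiveCoyonedaObj G).map p`. -/
def postcomp {X Y : C} (p : X ⟶ Y) : (G ⟶ X) →ₗ[(End G)ᵐᵒᵖ] (G ⟶ Y) :=
  ((preadditiveCoyonedaObj G).map p).hom

variable {G} in
lemma postcomp_apply {X Y : C} (p : X ⟶ Y) (f : G ⟶ X) : postcomp G p f = f ≫ p := rfl

lemma postcomp_injective {X Y : C} (p : X ⟶ Y) [Mono p] : Function.Injective (postcomp G p) :=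
  fun _ _ h => (cancel_mono p).1 h

variable [HasFiniteBiproducts C]

/-- The direct sum `Gⁿ`. -/
abbrev finPower (n : ℕ) : C := ⨁ fun _ : Fin n => G

instance projective_finPower [Projective G] (n : ℕ) : Projective (finPower G n) where
  factors f e _ :=
    ⟨biproduct.desc fun i => Projective.factorThru (biproduct.ι (fun _ => G) i ≫ f) e, by cat_disch⟩

lemma span_range_biproduct_ι (n : ℕ) :
    Submodule.span (End G)ᵐᵒᵖ (Set.range (biproduct.ι fun _ : Fin n => G)) = ⊤ := by
  refine eq_top_iff.2 fun f _ => ?_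
  have hf : f = ∑ i, op (End.of (f ≫ biproduct.π _ i)) • biproduct.ι (fun _ : Fin n => G) i := by
    simp [End.smul_left, ← Preadditive.comp_sum, biproduct.total]
  rw [hf]
  exact Submodule.sum_smul_mem _ _ fun i _ => Submodule.subset_span ⟨i, rfl⟩

instance finite_hom_finPower (n : ℕ) : Module.Finite (End G)ᵐᵒᵖ (G ⟶ finPower G n) :=
  ⟨Submodule.fg_iff_exists_fin_generating_family.2 ⟨n, _, span_range_biproduct_ι G n⟩⟩

variable {G} in
lemma exists_range_postcomp_eq {K : C} {T : Submodule (End G)ᵐᵒᵖ (G ⟶ K)} (hT : T.FG) :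
    ∃ (n : ℕ) (p : finPower G n ⟶ K), LinearMap.range (postcomp G p) = T := by
  obtain ⟨n, g, rfl⟩ := Submodule.fg_iff_exists_fin_generating_family.1 hT
  refine ⟨n, biproduct.desc g, ?_⟩
  have h : postcomp G (biproduct.desc g) ∘ biproduct.ι (fun _ : Fin n => G) = g :=
    funext fun i => biproduct.ι_desc g i
  rw [LinearMap.range_eq_map, ← span_range_biproduct_ι G n, Submodule.map_span, ← Set.range_comp, h]

instance projective_preadditiveCoyonedaObj_obj_finPower (n : ℕ) :
    Projective ((preadditiveCoyonedaObj G).obj (finPower G n)) :=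
  Projective.of_iso ((preadditiveCoyonedaObj G).mapBiproduct fun _ : Fin n => G).symm
    (projective_finPower ((preadditiveCoyonedaObj G).obj G) n)

lemma finite_hom_of_mono [IsNoetherianRing (End G)ᵐᵒᵖ] {K : C} {n : ℕ} (i : K ⟶ finPower G n)
    [Mono i] : Module.Finite (End G)ᵐᵒᵖ (G ⟶ K) :=
  Module.Finite.of_injective (postcomp G i) (postcomp_injective G i)

end HomFunctor

section Separator
variable {C : Type u} [Category.{v} C] [Abelian C] {G : C}

/-- A set of morphisms `X ⟶ Y` is jointly epic if only the zero morphism out of `Y` is killed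
by all of its members. -/
def IsJointlyEpic {X Y : C} (T : Set (X ⟶ Y)) : Prop :=
  ∀ ⦃Z : C⦄ (h : Y ⟶ Z), (∀ f ∈ T, f ≫ h = 0) → h = 0

lemma epi_of_isJointlyEpic_range {X Y Z : C} {p : Y ⟶ Z}
    (hp : IsJointlyEpic (X := X) (LinearMap.range (postcomp X p) : Set (X ⟶ Z))) : Epi p := by
  refine Preadditive.epi_of_cancel_zero _ fun h hph => hp h ?_
  rintro _ ⟨g, rfl⟩
  rw [postcomp_apply, Category.assoc, hph, comp_zero]

lemma isJointlyEpic_univ (hG : IsSeparator G) (X : C) : IsJointlyEpic (Set.univ : Set (G ⟶ X)) :=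
  fun _ h hh => (Preadditive.isSeparator_iff G).1 hG h fun f => hh f trivial

lemma exists_epi_finPower (hG : IsSeparator G) {K : C} (hK : Module.Finite (End G)ᵐᵒᵖ (G ⟶ K)) :
    ∃ (n : ℕ) (p : finPower G n ⟶ K), Epi p ∧ Function.Surjective (postcomp G p) := by
  obtain ⟨n, p, hp⟩ := exists_range_postcomp_eq hK.fg_top
  refine ⟨n, p, epi_of_isJointlyEpic_range (X := G) ?_, LinearMap.range_eq_top.1 hp⟩
  rw [hp]
  exact isJointlyEpic_univ hG K

lemma hasProjectiveDimensionLE_map_kernel_of_surjective {n : ℕ} {K : C} {p : finPower G n ⟶ K}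
    (hp : Function.Surjective (postcomp G p)) (j : ℕ)
    (hK : HasProjectiveDimensionLE ((preadditiveCoyonedaObj G).obj K) (j + 1)) :
    HasProjectiveDimensionLE ((preadditiveCoyonedaObj G).obj (kernel p)) j := by
  have : Epi ((preadditiveCoyonedaObj G).map p) := (ModuleCat.epi_iff_surjective _).2 hp
  have hker : HasProjectiveDimensionLE (kernel ((preadditiveCoyonedaObj G).map p)) j :=
    ((shortExact_kernel ((preadditiveCoyonedaObj G).map p)).hasProjectiveDimensionLT_X₃_iff j
      (projective_preadditiveCoyonedaObj_obj_finPower G n)).1 hK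
  exact hasProjectiveDimensionLT_of_iso (PreservesKernel.iso (preadditiveCoyonedaObj G) p).symm _

end Separator

section Ext
open Abelian
variable {C : Type u} [Category.{v} C] [Abelian C] [HasExt.{w} C]

lemma subsingleton_ext_finPower (X Y : C) (n i : ℕ) [Subsingleton (Ext X Y i)] :
    Subsingleton (Ext X (finPower Y n) i) :=
  (Ext.addEquivBiproduct X (biproduct.isBilimit _) i).toEquiv.subsingleton

lemma subsingleton_ext_of_retract {X Y Z : C} (r : Retract Y Z) (i : ℕ)
    [Subsingleton (Ext X Z i)] : Subsingleton (Ext X Y i) := by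
  refine subsingleton_of_forall_eq 0 fun e => ?_
  rw [← e.comp_mk₀_id, ← r.retract, ← Ext.mk₀_comp_mk₀, ← Ext.comp_assoc_of_third_deg_zero,
    Subsingleton.elim (e.comp _ _) 0, Ext.zero_comp]

lemma isSplitEpi_of_subsingleton_ext_one {X Y : C} (p : X ⟶ Y) [Epi p]
    [Subsingleton (Ext Y (kernel p) 1)] : IsSplitEpi p := by
  obtain ⟨x, hx⟩ := Ext.covariant_sequence_exact₃ Y (shortExact_kernel p) (Ext.mk₀ (𝟙 Y))
    (zero_add 1) (Subsingleton.elim _ _)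
  obtain ⟨s, rfl⟩ := Ext.homEquiv₀.symm.surjective x
  exact .mk' ⟨s, Ext.homEquiv₀.symm.injective (by simpa using hx)⟩

variable {G : C} [(preadditiveCoyonedaObj G).Full] [IsNoetherianRing (End G)ᵐᵒᵖ]

lemma subsingleton_ext_of_hasProjectiveDimensionLE (hG : IsSeparator G) {d : ℕ}
    (hExt : ∀ i, 1 ≤ i → i < d → Subsingleton (Ext G G i)) {j : ℕ} {K : C}
    (hfin : Module.Finite (End G)ᵐᵒᵖ (G ⟶ K))
    (hK : HasProjectiveDimensionLE ((preadditiveCoyonedaObj G).obj K) j) {i : ℕ}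
    (hi : 1 ≤ i) (hij : i + j < d) : Subsingleton (Ext G K i) := by
  induction j generalizing K i with
  | zero =>
    obtain ⟨n, p, _, hsurj⟩ := exists_epi_finPower hG hfin
    have := (isSeparator_iff_faithful_preadditiveCoyonedaObj G).1 hG
    have : Epi ((preadditiveCoyonedaObj G).map p) := (ModuleCat.epi_iff_surjective _).2 hsurj
    have := (projective_iff_hasProjectiveDimensionLE_zero _).2 hK
    have : IsSplitEpi p := ((preadditiveCoyonedaObj G).isSplitEpi_iff p).1
      (.mk' ⟨Projective.factorThru (𝟙 _) _, Projective.factorThru_comp _ _⟩)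
    have := hExt i hi hij
    have := subsingleton_ext_finPower G G n i
    exact subsingleton_ext_of_retract ⟨section_ p, p, IsSplitEpi.id p⟩ i
  | succ j ih =>
    obtain ⟨n, p, _, hsurj⟩ := exists_epi_finPower hG hfin
    have hker : Subsingleton (Ext G (kernel p) (i + 1)) :=
      ih (finite_hom_of_mono G (kernel.ι p))
        (hasProjectiveDimensionLE_map_kernel_of_surjective hsurj j hK) (by omega) (by omega)
    have := hExt i hi (by omega)
    have := subsingleton_ext_finPower G G n i
    refine subsingleton_of_forall_eq 0 fun e => ?_
    obtain ⟨x, rfl⟩ := Ext.covariant_sequence_exact₃ G (shortExact_kernel p) e rfl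
      (Subsingleton.elim _ _)
    rw [Subsingleton.elim x 0, Ext.zero_comp]

lemma isSplitEpi_finPower (hG : IsSeparator G) {d : ℕ}
    (hExt : ∀ i, 1 ≤ i → i < d → Subsingleton (Ext G G i))
    (hd : ∀ N : ModuleCat.{v} (End G)ᵐᵒᵖ, HasProjectiveDimensionLE N d)
    {n : ℕ} (p : finPower G n ⟶ G) [Epi p] : IsSplitEpi p := by
  obtain hd1 | ⟨k, rfl⟩ : d ≤ 1 ∨ ∃ k, d = k + 2 := by
    rcases d with _ | _ | k <;> simp
  · have := (isSeparator_iff_faithful_preadditiveCoyonedaObj G).1 hG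
    have := isSplitMono_kernel_ι_of_map (preadditiveCoyonedaObj G) p
      (have := hd; hasProjectiveDimensionLT_of_ge _ (d + 1) 2 (by omega))
    exact isSplitEpi_of_isSplitMono_kernel_ι p
  · have := subsingleton_ext_of_hasProjectiveDimensionLE hG hExt
      (finite_hom_of_mono G (kernel.ι p))
      (hasProjectiveDimensionLE_map_kernel (preadditiveCoyonedaObj G) p (hd _)) le_rfl (by omega)
    exact isSplitEpi_of_subsingleton_ext_one p

lemma id_mem_of_isJointlyEpic (hG : IsSeparator G) {d : ℕ}
    (hExt : ∀ i, 1 ≤ i → i < d → Subsingleton (Ext G G i))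
    (hd : ∀ N : ModuleCat.{v} (End G)ᵐᵒᵖ, HasProjectiveDimensionLE N d)
    {T : Submodule (End G)ᵐᵒᵖ (G ⟶ G)} (hT : IsJointlyEpic (T : Set (G ⟶ G))) : 𝟙 G ∈ T := by
  have : Module.Finite (End G)ᵐᵒᵖ (G ⟶ G) :=
    .equiv (Preadditive.homSelfLinearEquivEndMulOpposite G).symm
  obtain ⟨n, p, rfl⟩ := exists_range_postcomp_eq (IsNoetherian.noetherian T)
  have := epi_of_isJointlyEpic_range hT
  have := isSplitEpi_finPower hG hExt hd p
  exact ⟨section_ p, IsSplitEpi.id p⟩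

end Ext

section Adjunction
variable {C : Type u} [Category.{v} C] {D : Type u'} [Category.{v'} D]

lemma isEquivalence_of_reflectsIsomorphisms {L : D ⥤ C} {R : C ⥤ D} (adj : L ⊣ R) [R.Full]
    [R.Faithful] [L.ReflectsIsomorphisms] : R.IsEquivalence := by
  have (X : D) : IsIso (adj.unit.app X) := isIso_of_reflects_iso _ L
  exact adj.toEquivalence.isEquivalence_inverse

variable [Abelian C] [Abelian D]

lemma reflectsIsomorphisms_of_reflects_isZero (L : D ⥤ C) [L.PreservesZeroMorphisms]
    [L.PreservesMonomorphisms] [L.PreservesEpimorphisms]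
    (hL : ∀ X, IsZero (L.obj X) → IsZero X) : L.ReflectsIsomorphisms where
  reflects {X Y} f _ := by
    have hker : L.map (kernel.ι f) = 0 := (cancel_mono (L.map f)).1 <| by
      rw [← L.map_comp, kernel.condition, L.map_zero, zero_comp]
    have hcoker : L.map (cokernel.π f) = 0 := (cancel_epi (L.map f)).1 <| by
      rw [← L.map_comp, cokernel.condition, L.map_zero, comp_zero]
    have := Preadditive.mono_of_isZero_kernel f (hL _ (IsZero.of_mono_eq_zero _ hker))
    have := Preadditive.epi_of_isZero_cokernel f (hL _ (IsZero.of_epi_eq_zero _ hcoker))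
    exact isIso_of_mono_of_epi f

end Adjunction

section GabrielPopescu
open IsGrothendieckAbelian
variable {C : Type u} [Category.{v} C] [Abelian C] [IsGrothendieckAbelian.{v} C] {G : C}

lemma isZero_of_isZero_tensorObj (hG : IsSeparator G)
    (hId : ∀ T : Submodule (End G)ᵐᵒᵖ (G ⟶ G), IsJointlyEpic (T : Set (G ⟶ G)) → 𝟙 G ∈ T)
    {N : ModuleCat.{v} (End G)ᵐᵒᵖ} (hN : IsZero ((tensorObj G).obj N)) : IsZero N := by
  have := GabrielPopescu.preservesFiniteLimits G hG
  suffices ∀ x : N, x = 0 by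
    have : Subsingleton N := subsingleton_of_forall_eq 0 this
    exact ModuleCat.isZero_of_subsingleton N
  intro x
  let φ : (G ⟶ G) →ₗ[(End G)ᵐᵒᵖ] N := LinearMap.toSpanSingleton (End G)ᵐᵒᵖ N x ∘ₗ
    (Preadditive.homSelfLinearEquivEndMulOpposite G).toLinearMap
  suffices 𝟙 G ∈ LinearMap.ker φ from (one_smul (End G)ᵐᵒᵖ x).symm.trans this
  -- A morphism `h` killing the annihilator of `x` induces a map from the cyclic submodule `S x` to
  -- `Hom(G, Z)`; its adjoint starts at a subobject of `N ⊗ G = 0`.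
  refine hId _ fun Z h hh => ?_
  let ι := ModuleCat.ofHom ((LinearMap.ker φ).liftQ φ le_rfl)
  let ψ : ModuleCat.of (End G)ᵐᵒᵖ ((G ⟶ G) ⧸ LinearMap.ker φ) ⟶ (preadditiveCoyonedaObj G).obj Z :=
    ModuleCat.ofHom ((LinearMap.ker φ).liftQ (postcomp G h) hh)
  have : Mono ι := (ModuleCat.mono_iff_injective _).2
    (LinearMap.ker_eq_bot.1 (Submodule.ker_liftQ_eq_bot _ _ _ le_rfl))
  have hψ : ψ = 0 :=
    ((tensorObjPreadditiveCoyonedaObjAdjunction G).homEquiv _ Z).symm.injective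
      ((IsZero.of_mono ((tensorObj G).map ι) hN).eq_of_src _ _)
  exact (Category.id_comp h).symm.trans
    (congrArg (fun χ => χ.hom (Submodule.Quotient.mk (𝟙 G))) hψ)

theorem isEquivalence_preadditiveCoyonedaObj [HasExt.{w} C] [IsNoetherianRing (End G)ᵐᵒᵖ]
    (hG : IsSeparator G) {d : ℕ}
    (hExt : ∀ i, 1 ≤ i → i < d → Subsingleton (Abelian.Ext G G i))
    (hd : ∀ N : ModuleCat.{v} (End G)ᵐᵒᵖ, HasProjectiveDimensionLE N d) :
    (preadditiveCoyonedaObj G).IsEquivalence := by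
  have := (isSeparator_iff_faithful_preadditiveCoyonedaObj G).1 hG
  have := GabrielPopescu.full G hG
  have := GabrielPopescu.preservesFiniteLimits G hG
  have := reflectsIsomorphisms_of_reflects_isZero (tensorObj G) fun _ =>
    isZero_of_isZero_tensorObj hG fun _ => id_mem_of_isJointlyEpic hG hExt hd
  exact isEquivalence_of_reflectsIsomorphisms (tensorObjPreadditiveCoyonedaObjAdjunction G)

end GabrielPopescu

section GlobalDimension

lemma hasProjectiveDimensionLT_of_map {C : Type u} [Category.{v} C] [Abelian C]
    [EnoughProjectives C] {D : Type u'} [Category.{v'} D] [Abelian D] (F : C ⥤ D) [F.Additive]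
    [PreservesFiniteLimits F] [PreservesFiniteColimits F] [F.Full] [F.Faithful]
    [F.PreservesProjectiveObjects] {X : C} {n : ℕ} [HasProjectiveDimensionLT (F.obj X) n] :
    HasProjectiveDimensionLT X n := by
  let := HasExt.standard C
  let := HasExt.standard D
  refine HasProjectiveDimensionLT.mk fun i hi Y e => ?_
  exact (F.mapExt_bijective_of_preservesProjectiveObjects X Y i).1
    ((Abelian.Ext.eq_zero_of_hasProjectiveDimensionLT _ n hi).trans (map_zero _).symm)

variable {R S : Type} [Ring R] [Ring S] {d : ℕ}

lemma globalDimLE_iff :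
    globalDimLE R d ↔ ∀ X : ModuleCat.{0} Rᵐᵒᵖ, HasProjectiveDimensionLE X d where
  mp h X := .mk fun i hi Y _ => (h X Y i hi).elim _ _
  mpr h X Y i hi := (h X).subsingleton X _ i hi Y

lemma globalDim_le_iff : globalDim R ≤ d ↔ globalDimLE R d := by
  refine ⟨fun h => ?_, fun h => sInf_le ⟨d, rfl, h⟩⟩
  obtain ⟨_, ⟨e, rfl, he⟩, hed⟩ :=
    sInf_lt_iff.1 (h.trans_lt (ENat.natCast_lt_natCast.2 d.lt_succ_self))
  have hed : e ≤ d := Nat.lt_succ_iff.1 (ENat.natCast_lt_natCast.1 hed)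
  exact fun X Y i hi => he X Y i (hed.trans_lt hi)

lemma globalDimLE_of_equivalence (e : ModuleCat.{0} Rᵐᵒᵖ ≌ ModuleCat.{0} Sᵐᵒᵖ)
    (h : globalDimLE S d) : globalDimLE R d := by
  have := e.functor.additive_of_preserves_binary_products
  have := e.functor.preservesProjectiveObjects_of_adjunction_of_preservesEpimorphisms e.toAdjunction
  have := globalDimLE_iff.1 h
  exact globalDimLE_iff.2 fun X => hasProjectiveDimensionLT_of_map e.functor

lemma globalDim_eq_of_equivalence (e : ModuleCat.{0} Rᵐᵒᵖ ≌ ModuleCat.{0} Sᵐᵒᵖ) :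
    globalDim R = globalDim S := by
  have h (d : ℕ) : globalDimLE R d ↔ globalDimLE S d :=
    ⟨globalDimLE_of_equivalence e.symm, globalDimLE_of_equivalence e⟩
  simp only [globalDim, h]

end GlobalDimension

section FiniteProjective
variable {R : Type u} [Ring R]

/-- The endomorphisms of `G` that factor through a finite projective module, as a right ideal. -/
def factorsThroughFiniteProjective (G : ModuleCat.{v} R) :
    Submodule (End G)ᵐᵒᵖ (G ⟶ G) where
  carrier := {f | ∃ P : ModuleCat.{v} R, Module.Finite R P ∧ Module.Projective R P ∧
    ∃ (a : G ⟶ P) (b : P ⟶ G), f = a ≫ b}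
  zero_mem' := ⟨ModuleCat.of R PUnit, inferInstance, inferInstance, 0, 0, by simp⟩
  add_mem' := by
    rintro _ _ ⟨P, _, _, a, b, rfl⟩ ⟨P', _, _, a', b', rfl⟩
    exact ⟨ModuleCat.of R (P × P'), inferInstanceAs (Module.Finite R (P × P')),
      inferInstanceAs (Module.Projective R (P × P')), ModuleCat.ofHom (a.hom.prod a'.hom),
      ModuleCat.ofHom (b.hom.coprod b'.hom), rfl⟩
  smul_mem' := by
    rintro c _ ⟨P, hfin, hproj, a, b, rfl⟩
    exact ⟨P, hfin, hproj, c.unop ≫ a, b, (Category.assoc _ _ _).symm⟩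

lemma isJointlyEpic_factorsThroughFiniteProjective {G : ModuleCat.{u} R} (hG : IsSeparator G) :
    IsJointlyEpic (factorsThroughFiniteProjective G : Set (G ⟶ G)) := by
  refine fun Z h hh => ModuleCat.hom_ext (LinearMap.ext fun m => ?_)
  let b : ModuleCat.of R R ⟶ G := ModuleCat.ofHom (LinearMap.toSpanSingleton R G m)
  have hb : b ≫ h = 0 := (Preadditive.isSeparator_iff G).1 hG _ fun a => by
    rw [← Category.assoc]
    exact hh _ ⟨ModuleCat.of R R, inferInstance, inferInstance, a, b, rfl⟩
  rw [← one_smul R m]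
  exact congrArg (fun g => g.hom (1 : R)) hb

lemma finite_and_projective_of_id_mem {G : ModuleCat.{v} R}
    (h : 𝟙 G ∈ factorsThroughFiniteProjective G) : Module.Finite R G ∧ Module.Projective R G := by
  obtain ⟨P, _, _, a, b, hab⟩ := h
  have hba : b.hom ∘ₗ a.hom = LinearMap.id := (congrArg ModuleCat.Hom.hom hab).symm
  exact ⟨.of_surjective b.hom fun m => ⟨a.hom m, LinearMap.congr_fun hba m⟩,
    .of_split a.hom b.hom hba⟩

end FiniteProjective

section Generator

lemma isSeparator_of_surjective_pi {R : Type u} [Ring R] {M : Type v} [AddCommGroup M] [Module R M]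
    {ι : Type w} [Finite ι] {p : (ι → M) →ₗ[R] R} (hp : Function.Surjective p) :
    IsSeparator (ModuleCat.of R M) := by
  classical
  refine (Preadditive.isSeparator_iff _).2 fun {X Y} f hf =>
    ModuleCat.hom_ext (LinearMap.ext fun x => ?_)
  obtain ⟨m, hm⟩ := hp 1
  have h : f.hom ∘ₗ LinearMap.toSpanSingleton R X x ∘ₗ p = 0 := LinearMap.pi_ext' fun i =>
    congrArg ModuleCat.Hom.hom (hf (ModuleCat.ofHom
      (LinearMap.toSpanSingleton R X x ∘ₗ p ∘ₗ LinearMap.single R (fun _ => M) i)))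
  simpa [hm] using LinearMap.congr_fun h m

variable {A M : Type} [Ring A] [AddCommGroup M] [Module Aᵐᵒᵖ M]

lemma IsRGenerator.isSeparator (h : IsRGenerator A M) : IsSeparator (ModuleCat.of Aᵐᵒᵖ M) := by
  obtain ⟨k, p, s, hps⟩ := h
  have hp : Function.Surjective p := fun a => ⟨s a, LinearMap.congr_fun hps a⟩
  exact isSeparator_of_surjective_pi (p := (opLinearEquiv Aᵐᵒᵖ).toLinearMap ∘ₗ p)
    ((opLinearEquiv Aᵐᵒᵖ).surjective.comp hp)

end Generator

/-- Let `M` be a generator over `A` such that `End_A(M)` is right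
noetherian of finite global dimension `d`. If `Ext^i_A(M, M) = 0` for `i = 1, …, d − 1`,
then `M` is a finitely generated projective `A`-module and `A` has global dimension `d`. -/
theorem generator_with_vanishing_ext_is_projective
    (A : Type) [Ring A] (M : Type) [AddCommGroup M] [Module Aᵐᵒᵖ M]
    (hgen : IsRGenerator A M)
    (hnoeth : IsNoetherianRing (Module.End Aᵐᵒᵖ M)ᵐᵒᵖ)
    (d : ℕ) (hd : globalDim (Module.End Aᵐᵒᵖ M) = (d : ℕ∞))
    (hvanish : ∀ i : ℕ, 1 ≤ i → i < d →
      Subsingleton (Abelian.Ext (ModuleCat.of Aᵐᵒᵖ M) (ModuleCat.of Aᵐᵒᵖ M) i)) :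
    (Module.Finite Aᵐᵒᵖ M ∧ Module.Projective Aᵐᵒᵖ M) ∧ globalDim A = (d : ℕ∞) := by
  let G := ModuleCat.of Aᵐᵒᵖ M
  have hG : IsSeparator G := hgen.isSeparator
  let e : (End G)ᵐᵒᵖ ≃+* (Module.End Aᵐᵒᵖ M)ᵐᵒᵖ := (ModuleCat.endRingEquiv G).op
  have := isNoetherianRing_of_ringEquiv _ e.symm
  have hEnd : globalDim (End G) = globalDim (Module.End Aᵐᵒᵖ M) :=
    globalDim_eq_of_equivalence (ModuleCat.restrictScalarsEquivalenceOfRingEquiv e.symm)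
  have hpd : ∀ N : ModuleCat.{0} (End G)ᵐᵒᵖ, HasProjectiveDimensionLE N d :=
    globalDimLE_iff.1 (globalDim_le_iff.1 (hEnd.trans hd).le)
  have := IsGrothendieckAbelian.GabrielPopescu.full G hG
  have := isEquivalence_preadditiveCoyonedaObj hG hvanish hpd
  refine ⟨finite_and_projective_of_id_mem (id_mem_of_isJointlyEpic hG hvanish hpd
    (isJointlyEpic_factorsThroughFiniteProjective hG)), ?_⟩
  calc globalDim A = globalDim (End G) :=
        globalDim_eq_of_equivalence (preadditiveCoyonedaObj G).asEquivalence
    _ = globalDim (Module.End Aᵐᵒᵖ M) := hEnd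
    _ = d := hd

end MoritaHochschild
end
end

section
/- For a Morita context (C,e) with A = eCe, B = e'Ce', M = e'Ce, N = eCe', the following are equivalent: (1) (C,e) is a Wedderburn context, i.e. C̄' = C/Ce'C = 0 and grade_C(C̄) ≥ 2 where C̄ = C/CeC; (2) (C,e) is a right Auslander context (the natural map C → End_A(M ⊕ A) is an isomorphism) and M is an A-generator; (3) (C,e') is a right Auslander context (the natural map C → End_B(N ⊕ B) is an isomorphism) and N is a Wedderburn projective over B; moreover in case (3), C̄ ≅ B/τ_N(B), the quotient of B by the trace ideal of N. -/
open CategoryTheory MulOpposite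

attribute [local instance] HasDerivedCategory.standard
attribute [local instance] CategoryTheory.hasExt_of_hasDerivedCategory

set_option maxHeartbeats 1000000
set_option synthInstance.maxHeartbeats 400000

noncomputable section
namespace MoritaHochschild

/-! ### Corners `pCq` of a ring with idempotents `p`, `q` -/

variable {C : Type} [Ring C]

instance factOneIdem : Fact (IsIdempotentElem (1 : C)) := ⟨IsIdempotentElem.one⟩

instance factOneSubIdem {e : C} [he : Fact (IsIdempotentElem e)] :
    Fact (IsIdempotentElem (1 - e)) := ⟨he.out.one_sub⟩

/-- The subset `pCq` of a ring `C`; for idempotents `p`, `q` this is the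
corresponding "corner" of `C`. -/
def Hand (p q : C) : Type := {x : C // p * x * q = x}

namespace Hand

variable {p q r : C}

def val (x : Hand p q) : C := x.1

lemma prop (x : Hand p q) : p * x.val * q = x.val := x.2

lemma val_injective : Function.Injective (val (p := p) (q := q)) :=
  fun _ _ h => Subtype.ext h

def mk (x : C) (h : p * x * q = x) : Hand p q := ⟨x, h⟩

instance : Zero (Hand p q) := ⟨⟨0, by simp⟩⟩
instance : Add (Hand p q) :=
  ⟨fun x y => ⟨x.val + y.val, by rw [mul_add, add_mul, x.prop, y.prop]⟩⟩
instance : Neg (Hand p q) :=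
  ⟨fun x => ⟨-x.val, by rw [mul_neg, neg_mul, x.prop]⟩⟩
instance : Sub (Hand p q) :=
  ⟨fun x y => ⟨x.val - y.val, by rw [mul_sub, sub_mul, x.prop, y.prop]⟩⟩
instance : SMul ℕ (Hand p q) :=
  ⟨fun n x => ⟨n • x.val, by rw [mul_smul_comm, smul_mul_assoc, x.prop]⟩⟩
instance : SMul ℤ (Hand p q) :=
  ⟨fun n x => ⟨n • x.val, by rw [mul_smul_comm, smul_mul_assoc, x.prop]⟩⟩

instance : AddCommGroup (Hand p q) :=
  val_injective.addCommGroup val rfl (fun _ _ => rfl) (fun _ => rfl) (fun _ _ => rfl)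
    (fun _ _ => rfl) (fun _ _ => rfl)

/-- `val` as an additive map. -/
def valHom : Hand p q →+ C where
  toFun := val
  map_zero' := rfl
  map_add' := fun _ _ => rfl

@[simp] lemma val_add (x y : Hand p q) : (x + y).val = x.val + y.val := rfl
@[simp] lemma val_zero : (0 : Hand p q).val = 0 := rfl

section Facts

variable [hp : Fact (IsIdempotentElem p)] [hq : Fact (IsIdempotentElem q)]
    [hr : Fact (IsIdempotentElem r)]

lemma left_absorb (x : Hand p q) : p * x.val = x.val := by
  conv_lhs => rw [← x.prop]
  rw [← mul_assoc, ← mul_assoc, hp.out.eq]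
  exact x.prop

lemma right_absorb (x : Hand p q) : x.val * q = x.val := by
  conv_lhs => rw [← x.prop]
  rw [mul_assoc, mul_assoc, hq.out.eq, ← mul_assoc]
  exact x.prop

/-- Multiplication `pCq × qCr → pCr`. -/
def hmul (x : Hand p q) (y : Hand q r) : Hand p r :=
  ⟨x.val * y.val, by
    rw [← mul_assoc, left_absorb x, mul_assoc, right_absorb y]⟩

@[simp] lemma val_hmul (x : Hand p q) (y : Hand q r) :
    (hmul x y).val = x.val * y.val := rfl

/-- Compression of an element of `C` into the corner `pCq`. -/
def compress (p q : C) [hp : Fact (IsIdempotentElem p)] [hq : Fact (IsIdempotentElem q)]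
    (x : C) : Hand p q :=
  ⟨p * x * q, by
    have h1 : p * (p * x * q) * q = (p * p) * x * (q * q) := by noncomm_ring
    rw [h1, hp.out.eq, hq.out.eq]⟩

@[simp] lemma val_compress (x : C) : (compress p q x).val = p * x * q := rfl

instance : Mul (Hand p p) := ⟨fun x y => hmul x y⟩

instance : One (Hand p p) := ⟨⟨p, by rw [hp.out.eq, hp.out.eq]⟩⟩

@[simp] lemma val_mul (x y : Hand p p) : (x * y).val = x.val * y.val := rfl
@[simp] lemma val_one : (1 : Hand p p).val = p := rfl

/-- The corner `pCp` is a ring, with unit `p`. -/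
instance ring : Ring (Hand p p) :=
  { (inferInstance : AddCommGroup (Hand p p)) with
    mul := (· * ·)
    left_distrib := fun x y z => Subtype.ext (mul_add x.val y.val z.val)
    right_distrib := fun x y z => Subtype.ext (add_mul x.val y.val z.val)
    zero_mul := fun x => Subtype.ext (zero_mul x.val)
    mul_zero := fun x => Subtype.ext (mul_zero x.val)
    mul_assoc := fun x y z => Subtype.ext (mul_assoc x.val y.val z.val)
    one := 1
    one_mul := fun x => Subtype.ext (left_absorb x)
    mul_one := fun x => Subtype.ext (right_absorb x) }

/-- `pCq` is a left module over the corner ring `pCp`. -/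
instance : Module (Hand p p) (Hand p q) where
  smul a x := hmul a x
  one_smul x := Subtype.ext (left_absorb x)
  mul_smul a b x := Subtype.ext (mul_assoc a.val b.val x.val)
  smul_zero a := Subtype.ext (mul_zero a.val)
  smul_add a x y := Subtype.ext (mul_add a.val x.val y.val)
  add_smul a b x := Subtype.ext (add_mul a.val b.val x.val)
  zero_smul x := Subtype.ext (zero_mul x.val)

/-- `pCq` is a right module over the corner ring `qCq`. -/
instance : Module (Hand q q)ᵐᵒᵖ (Hand p q) where
  smul a x := hmul x a.unop
  one_smul x := Subtype.ext (right_absorb x)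
  mul_smul a b x := Subtype.ext (mul_assoc x.val b.unop.val a.unop.val).symm
  smul_zero a := Subtype.ext (zero_mul a.unop.val)
  smul_add a x y := Subtype.ext (add_mul x.val y.val a.unop.val)
  add_smul a b x := Subtype.ext (mul_add x.val a.unop.val b.unop.val)
  zero_smul x := Subtype.ext (mul_zero x.val)

@[simp] lemma val_smul (a : Hand p p) (x : Hand p q) : (a • x).val = a.val * x.val := rfl

@[simp] lemma val_op_smul (a : (Hand q q)ᵐᵒᵖ) (x : Hand p q) :
    (a • x).val = x.val * a.unop.val := rfl

/-- `pC = pC1` is a right module over `C` itself. -/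
instance : Module Cᵐᵒᵖ (Hand p (1 : C)) where
  smul c x := ⟨x.val * c.unop, by rw [mul_one, ← mul_assoc, left_absorb x]⟩
  one_smul x := Subtype.ext (mul_one x.val)
  mul_smul a b x := Subtype.ext (mul_assoc x.val b.unop a.unop).symm
  smul_zero a := Subtype.ext (zero_mul a.unop)
  smul_add a x y := Subtype.ext (add_mul x.val y.val a.unop)
  add_smul a b x := Subtype.ext (mul_add x.val a.unop b.unop)
  zero_smul x := Subtype.ext (mul_zero x.val)

@[simp] lemma val_op_smul' (c : Cᵐᵒᵖ) (x : Hand p (1 : C)) :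
    (c • x).val = x.val * c.unop := rfl

/-- `Cq = 1Cq` is a left module over `C` itself. -/
instance : Module C (Hand (1 : C) q) where
  smul c x := ⟨c * x.val, by rw [one_mul, mul_assoc, right_absorb x]⟩
  one_smul x := Subtype.ext (one_mul x.val)
  mul_smul a b x := Subtype.ext (mul_assoc a b x.val)
  smul_zero a := Subtype.ext (mul_zero a)
  smul_add a x y := Subtype.ext (mul_add a x.val y.val)
  add_smul a b x := Subtype.ext (add_mul a b x.val)
  zero_smul x := Subtype.ext (zero_mul x.val)

@[simp] lemma val_smul' (c : C) (x : Hand (1 : C) q) :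
    (c • x).val = c * x.val := rfl

end Facts

end Hand
/-! ### The Morita defect `C̄ = C/CeC` -/

/-- The Morita defect: the quotient ring `C/CeC` of `C` by the two-sided ideal
generated by the idempotent `e`. -/
def CBar (e : C) : Type := (TwoSidedIdeal.span {e}).ringCon.Quotient

instance (e : C) : Ring (CBar e) :=
  inferInstanceAs (Ring (TwoSidedIdeal.span {e}).ringCon.Quotient)

/-- The quotient map `C → C/CeC`. -/
def cbarMk (e : C) : C →+* CBar e := RingCon.mk' _

lemma cbarMk_surjective (e : C) : Function.Surjective (cbarMk e) :=
  fun x => Quotient.inductionOn' x (fun c => ⟨c, rfl⟩)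

lemma cbarMk_eq_zero_iff (e : C) (x : C) :
    cbarMk e x = 0 ↔ x ∈ TwoSidedIdeal.span {e} := by
  have : (0 : CBar e) = cbarMk e 0 := rfl
  rw [this]
  constructor
  · intro h
    have h' := (RingCon.eq _).1 h
    simpa using (TwoSidedIdeal.rel_iff _ _ _).1 h'
  · intro h
    exact (RingCon.eq _).2 ((TwoSidedIdeal.rel_iff _ _ _).2 (by simpa using h))

/-- `C/CeC` as a right `C`-module. -/
noncomputable instance (e : C) : Module Cᵐᵒᵖ (CBar e) :=
  Module.compHom (CBar e) (RingHom.op (cbarMk e))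

lemma op_smul_cbar (e : C) (c : C) (x : CBar e) :
    (MulOpposite.op c) • x = x * cbarMk e c := rfl

/-- `C/CeC` as a left `C`-module. -/
noncomputable instance cbarLeftModule (e : C) : Module C (CBar e) :=
  Module.compHom (CBar e) (cbarMk e)

lemma smul_cbar (e : C) (c : C) (x : CBar e) :
    c • x = cbarMk e c * x := rfl
/-! ### Grade of a module, via vanishing of Ext -/

/-- The grade of a right `R`-module `X`:
`grade_R X = inf { i | Ext^i_R(X, R) ≠ 0 }`, as an element of `ℕ∞`. -/
def rgrade (R : Type) [Ring R] (X : Type) [AddCommGroup X] [Module Rᵐᵒᵖ X] : ℕ∞ :=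
  sInf {i : ℕ∞ | ∃ n : ℕ, i = n ∧
    ¬ Subsingleton (Abelian.Ext (ModuleCat.of Rᵐᵒᵖ X) (ModuleCat.of Rᵐᵒᵖ R) n)}

/-- The grade of a left `R`-module `X`. -/
def lgrade (R : Type) [Ring R] (X : Type) [AddCommGroup X] [Module R X] : ℕ∞ :=
  sInf {i : ℕ∞ | ∃ n : ℕ, i = n ∧
    ¬ Subsingleton (Abelian.Ext (ModuleCat.of R X) (ModuleCat.of R R) n)}
/-- `Hom_R(P, R)` is a right module over `End_R(P)`, by precomposition. -/
instance homModuleEndOp (R : Type) [Ring R] (P : Type) [AddCommGroup P] [Module Rᵐᵒᵖ P] :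
    Module (Module.End Rᵐᵒᵖ P)ᵐᵒᵖ (P →ₗ[Rᵐᵒᵖ] R) where
  smul φ lam := lam.comp φ.unop
  one_smul lam := LinearMap.ext fun _ => rfl
  mul_smul φ ψ lam := LinearMap.ext fun _ => rfl
  smul_zero φ := LinearMap.ext fun _ => rfl
  smul_add φ lam lam' := LinearMap.ext fun _ => rfl
  add_smul φ ψ lam := LinearMap.ext fun x => map_add lam _ _
  zero_smul lam := LinearMap.ext fun x => map_zero lam

/-- A right `R`-module `P` is a Wedderburn projective if it is finitely generated
projective and the natural ring homomorphism
`R → End_{End_R(P)}(Hom_R(P, R))` is an isomorphism. -/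
def IsWedderburnProjective (R : Type) [Ring R] (P : Type) [AddCommGroup P]
    [Module Rᵐᵒᵖ P] : Prop :=
  Module.Finite Rᵐᵒᵖ P ∧ Module.Projective Rᵐᵒᵖ P ∧
  ∃ Φ : R →+* Module.End (Module.End Rᵐᵒᵖ P)ᵐᵒᵖ (P →ₗ[Rᵐᵒᵖ] R),
    (∀ (r : R) (lam : P →ₗ[Rᵐᵒᵖ] R) (x : P), (Φ r lam) x = r * lam x)
    ∧ Function.Bijective Φ

/-- The trace ideal `τ_P(R)` of a right `R`-module `P`: the two-sided ideal of `R`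
generated by (equivalently, consisting of all sums of) values of `R`-linear functionals
on `P`; the image of the evaluation map `Hom_R(P, R) ⊗_{End_R(P)} P → R`. -/
def traceIdeal (R : Type) [Ring R] (P : Type) [AddCommGroup P] [Module Rᵐᵒᵖ P] :
    TwoSidedIdeal R :=
  TwoSidedIdeal.span {r : R | ∃ (lam : P →ₗ[Rᵐᵒᵖ] R) (x : P), r = lam x}

/-!
The grade condition is a statement about left multiplications: applying `Hom_C(-, C)` to
`0 → CeC → C → C̄ → 0` shows that `grade C̄ ≥ 2` iff `C → Hom_C(CeC, C)` is bijective. Since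
`CeC` is generated by `Ce`, restricting a map `CeC → C` to `Ce` compares this with
`C → End_{eCe}(Ce)`, so `grade C̄ ≥ 2` iff `(C, e)` is a right Auslander context.

All remaining conditions concern the maps `rCs → Hom_{pCp}(sCp, rCp)`. If `r ∈ Cr'C` and
`s ∈ Cs'C`, write `r = ∑ aᵢbᵢ` and `s = ∑ cⱼdⱼ` through `r'` and `s'`; then
`x = ∑ aᵢ(bᵢxcⱼ)dⱼ` recovers `x` from its corners in `r'Cs'`, so bijectivity for `(r', s')`
implies bijectivity for `(r, s)`. With `q = 1 - e`, the condition `C̄' = 0` says `e ∈ CqC`, hence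
`1 ∈ CqC`, and then `(C, e)` is Auslander iff `qCq → Hom_{eCe}(qCe, qCe)` is bijective, which is
the Wedderburn condition on `eCq`.
-/

section Grade

open Abelian

variable {𝒜 : Type*} [Category 𝒜] [Abelian 𝒜] [HasExt 𝒜] {S : ShortComplex 𝒜}

lemma subsingleton_ext_zero_iff_injective_precomp (hS : S.ShortExact) (Y : 𝒜) :
    Subsingleton (Ext S.X₃ Y 0) ↔ Function.Injective fun g : S.X₂ ⟶ Y => S.f ≫ g := by
  have := hS.epi_g
  rw [Ext.homEquiv₀.subsingleton_congr]
  constructor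
  · intro h g g' hgg'
    have hzero : S.f ≫ (g - g') = 0 := by simpa [sub_eq_zero] using hgg'
    rw [← sub_eq_zero, ← hS.exact.g_desc _ hzero, Subsingleton.elim (hS.exact.desc _ hzero) 0,
      Limits.comp_zero]
  · intro h
    refine ⟨fun u v => (cancel_epi S.g).1 (h ?_)⟩
    simp

lemma subsingleton_ext_one_iff_surjective_precomp (hS : S.ShortExact) [Projective S.X₂] (Y : 𝒜) :
    Subsingleton (Ext S.X₃ Y 1) ↔ Function.Surjective fun g : S.X₂ ⟶ Y => S.f ≫ g := by
  constructor
  · intro h u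
    obtain ⟨x, hx⟩ := Ext.contravariant_sequence_exact₁ hS Y (Ext.mk₀ u) (add_zero 1)
      (Subsingleton.elim _ _)
    obtain ⟨g, rfl⟩ := (Ext.mk₀_bijective S.X₂ Y).surjective x
    exact ⟨g, (Ext.mk₀_bijective S.X₁ Y).injective (by rw [← hx, Ext.mk₀_comp_mk₀])⟩
  · intro h
    refine subsingleton_of_forall_eq 0 fun x => ?_
    obtain ⟨y, rfl⟩ := Ext.contravariant_sequence_exact₃ hS Y x
      (Ext.eq_zero_of_projective _) (add_zero 1)
    obtain ⟨u, rfl⟩ := (Ext.mk₀_bijective S.X₁ Y).surjective y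
    obtain ⟨g, rfl⟩ := h u
    rw [← Ext.mk₀_comp_mk₀, hS.extClass_comp_assoc]

lemma two_le_rgrade_iff (R : Type) [Ring R] (X : Type) [AddCommGroup X] [Module Rᵐᵒᵖ X] :
    2 ≤ rgrade R X ↔
      Subsingleton (Ext (ModuleCat.of Rᵐᵒᵖ X) (ModuleCat.of Rᵐᵒᵖ R) 0) ∧
        Subsingleton (Ext (ModuleCat.of Rᵐᵒᵖ X) (ModuleCat.of Rᵐᵒᵖ R) 1) := by
  rw [rgrade, le_sInf_iff]
  constructor
  · intro h
    constructor <;> by_contra hn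
    · exact absurd (h _ ⟨0, rfl, hn⟩) (by simp)
    · exact absurd (h _ ⟨1, rfl, hn⟩) (by simp)
  · rintro ⟨h₀, h₁⟩ _ ⟨n, rfl, hn⟩
    match n with
    | 0 => exact absurd h₀ hn
    | 1 => exact absurd h₁ hn
    | n + 2 => exact_mod_cast Nat.le_add_left 2 n

instance projective_mulOpposite_self (R : Type*) [Ring R] : Module.Projective Rᵐᵒᵖ R :=
  Module.Projective.of_equiv (MulOpposite.opLinearEquiv Rᵐᵒᵖ).symm

lemma two_le_rgrade_iff_bijective_domRestrict_ker {R X : Type} [Ring R] [AddCommGroup X]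
    [Module Rᵐᵒᵖ X] {π : R →ₗ[Rᵐᵒᵖ] X} (hπ : Function.Surjective π) :
    2 ≤ rgrade R X ↔
      Function.Bijective fun c : R =>
        (Module.toModuleEnd Rᵐᵒᵖ R c).domRestrict (LinearMap.ker π) := by
  have hS := LinearMap.shortExact_shortComplexKer hπ
  have : Projective π.shortComplexKer.X₂ :=
    inferInstanceAs (Projective (ModuleCat.of Rᵐᵒᵖ R))
  let homsFromR : R ≃ (ModuleCat.of Rᵐᵒᵖ R ⟶ ModuleCat.of Rᵐᵒᵖ R) :=
    (RingEquiv.moduleEndSelfOp R).toEquiv.trans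
      (ModuleCat.homEquiv (M := ModuleCat.of Rᵐᵒᵖ R) (N := ModuleCat.of Rᵐᵒᵖ R)).symm
  let homsFromKer : (π.shortComplexKer.X₁ ⟶ ModuleCat.of Rᵐᵒᵖ R) ≃
      (LinearMap.ker π →ₗ[Rᵐᵒᵖ] R) := ModuleCat.homEquiv
  calc 2 ≤ rgrade R X
    _ ↔ Function.Bijective fun g : π.shortComplexKer.X₂ ⟶ ModuleCat.of Rᵐᵒᵖ R =>
          π.shortComplexKer.f ≫ g :=
      (two_le_rgrade_iff R X).trans (and_congr
        (subsingleton_ext_zero_iff_injective_precomp hS _)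
        (subsingleton_ext_one_iff_surjective_precomp hS _))
    _ ↔ Function.Bijective fun c : R =>
          homsFromKer (π.shortComplexKer.f ≫ homsFromR c) :=
      ((homsFromKer.comp_bijective _).trans (homsFromR.bijective_comp _)).symm

end Grade

namespace Hand

variable {p q r s : C}

@[ext] lemma ext {x y : Hand p q} (h : x.val = y.val) : x = y :=
  val_injective h

@[simp] lemma val_sum {ι : Type*} (u : Finset ι) (f : ι → Hand p q) :
    (∑ i ∈ u, f i).val = ∑ i ∈ u, (f i).val :=
  map_sum valHom f u

variable [Fact (IsIdempotentElem p)] [Fact (IsIdempotentElem q)] [Fact (IsIdempotentElem r)]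
  [Fact (IsIdempotentElem s)]

lemma hmul_assoc (x : Hand p q) (y : Hand q r) (z : Hand r s) :
    hmul (hmul x y) z = hmul x (hmul y z) :=
  ext (mul_assoc _ _ _)

lemma one_hmul (x : Hand p q) : hmul (1 : Hand p p) x = x :=
  one_smul (Hand p p) x

lemma hmul_one (x : Hand p q) : hmul x (1 : Hand q q) = x :=
  one_smul (Hand q q)ᵐᵒᵖ x

lemma zero_hmul (y : Hand q r) : hmul (0 : Hand p q) y = 0 :=
  ext (zero_mul _)

lemma hmul_zero (x : Hand p q) : hmul x (0 : Hand q r) = 0 :=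
  ext (mul_zero _)

lemma sum_hmul {ι : Type*} (u : Finset ι) (f : ι → Hand p q) (y : Hand q r) :
    hmul (∑ i ∈ u, f i) y = ∑ i ∈ u, hmul (f i) y :=
  ext (by simp only [val_hmul, val_sum, Finset.sum_mul])

lemma hmul_sum {ι : Type*} (u : Finset ι) (x : Hand p q) (f : ι → Hand q r) :
    hmul x (∑ i ∈ u, f i) = ∑ i ∈ u, hmul x (f i) :=
  ext (by simp only [val_hmul, val_sum, Finset.mul_sum])

/-- Left multiplication as an additive map `rCs → Hom_{pCp}(sCp, rCp)`. -/
def leftMul (p r s : C) [Fact (IsIdempotentElem p)] [Fact (IsIdempotentElem r)]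
    [Fact (IsIdempotentElem s)] : Hand r s →+ (Hand s p →ₗ[(Hand p p)ᵐᵒᵖ] Hand r p) where
  toFun x :=
    { toFun := hmul x
      map_add' := fun _ _ => ext (mul_add _ _ _)
      map_smul' := fun a y => (hmul_assoc x y a.unop).symm }
  map_zero' := LinearMap.ext fun _ => ext (zero_mul _)
  map_add' _ _ := LinearMap.ext fun _ => ext (add_mul _ _ _)

@[simp] lemma leftMul_apply (x : Hand r s) (y : Hand s p) : leftMul p r s x y = hmul x y := rfl

lemma map_hmul (f : Hand s p →ₗ[(Hand p p)ᵐᵒᵖ] Hand r p) (x : Hand s p) (a : Hand p p) :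
    f (hmul x a) = hmul (f x) a :=
  f.map_smul (op a) x

instance : SMulCommClass (Hand p p) (Hand q q)ᵐᵒᵖ (Hand p q) :=
  ⟨fun a b x => ext (mul_assoc a.val x.val b.unop.val).symm⟩

instance : SMulCommClass C (Hand q q)ᵐᵒᵖ (Hand 1 q) :=
  ⟨fun c b x => ext (mul_assoc c x.val b.unop.val).symm⟩

end Hand

open Hand

section MoritaDefect

variable {q r s : C} [Fact (IsIdempotentElem q)] [Fact (IsIdempotentElem r)]
  [Fact (IsIdempotentElem s)]

/-- The quotient map `C → C/CeC` as a map of right `C`-modules. -/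
def cbarLin (e : C) : C →ₗ[Cᵐᵒᵖ] CBar e where
  toFun := cbarMk e
  map_add' := map_add _
  map_smul' c x := map_mul (cbarMk e) x c.unop

lemma ker_cbarLin (e : C) [Fact (IsIdempotentElem e)] :
    LinearMap.ker (cbarLin e) = Submodule.span Cᵐᵒᵖ (Set.range (val : Hand 1 e → C)) := by
  refine le_antisymm (fun x hx => ?_) (Submodule.span_le.2 ?_)
  · have hx' : x ∈ TwoSidedIdeal.span {e} := (cbarMk_eq_zero_iff e x).1 hx
    rw [TwoSidedIdeal.mem_span_iff_mem_addSubgroup_closure] at hx'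
    refine (AddSubgroup.closure_le (Submodule.span Cᵐᵒᵖ _).toAddSubgroup).2 ?_ hx'
    rintro _ ⟨_, ⟨c, -, e, rfl, rfl⟩, d, -, rfl⟩
    have hc : c * e ∈ Set.range (val : Hand 1 e → C) := ⟨compress 1 e c, by simp⟩
    exact Submodule.smul_mem _ (op d) (Submodule.subset_span hc)
  · rintro _ ⟨x, rfl⟩
    refine (cbarMk_eq_zero_iff e _).2 ?_
    rw [← right_absorb x]
    exact TwoSidedIdeal.mul_mem_left _ _ _ (TwoSidedIdeal.subset_span rfl)

lemma val_hmul_mem_span (a : Hand r q) (b : Hand q s) :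
    (hmul a b).val ∈ TwoSidedIdeal.span {q} := by
  rw [val_hmul, ← right_absorb a, mul_assoc]
  exact TwoSidedIdeal.mul_mem_left _ _ _
    (TwoSidedIdeal.mul_mem_right _ _ _ (TwoSidedIdeal.subset_span rfl))

lemma val_mem_span_iff_exists_sum_hmul (x : Hand r s) :
    x.val ∈ TwoSidedIdeal.span {q} ↔
      ∃ (k : ℕ) (a : Fin k → Hand r q) (b : Fin k → Hand q s), ∑ i, hmul (a i) (b i) = x := by
  constructor
  · intro hx
    have hx' : x.val ∈ LinearMap.ker (cbarLin q) := (cbarMk_eq_zero_iff q _).2 hx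
    rw [ker_cbarLin, Submodule.mem_span_set'] at hx'
    obtain ⟨k, d, c, hcd⟩ := hx'
    choose y hy using fun i => (c i).2
    refine ⟨k, fun i => compress r q (y i).val, fun i => compress q s (d i).unop, Hand.ext ?_⟩
    have hterm (i : Fin k) :
        r * (y i).val * q * (q * (d i).unop * s) = r * (d i • (y i).val) * s := by
      rw [mul_assoc r, right_absorb, smul_eq_mul_unop]
      simp only [← mul_assoc]
      rw [mul_assoc r, right_absorb]
    simp only [← hy] at hcd
    simp only [val_sum, val_hmul, val_compress, hterm, ← Finset.sum_mul, ← Finset.mul_sum, hcd,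
      x.prop]
  · rintro ⟨k, a, b, rfl⟩
    rw [val_sum]
    exact sum_mem fun i _ => val_hmul_mem_span (a i) (b i)

lemma subsingleton_cBar_one_sub_iff_mem_span (e : C) :
    Subsingleton (CBar (1 - e)) ↔ e ∈ TwoSidedIdeal.span {1 - e} := by
  have hzero : cbarMk (1 - e) (1 - e) = 0 :=
    (cbarMk_eq_zero_iff _ _).2 (TwoSidedIdeal.subset_span rfl)
  rw [map_sub, map_one, sub_eq_zero] at hzero
  rw [← cbarMk_eq_zero_iff, ← hzero, eq_comm, subsingleton_iff_zero_eq_one]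

lemma one_mem_span_one_sub_of_mem {e : C} (h : e ∈ TwoSidedIdeal.span {1 - e}) :
    (1 : C) ∈ TwoSidedIdeal.span {1 - e} := by
  simpa using add_mem h (TwoSidedIdeal.subset_span rfl)

end MoritaDefect

section LeftMul

variable {p q r r' s s' : C} [Fact (IsIdempotentElem p)] [Fact (IsIdempotentElem q)]
  [Fact (IsIdempotentElem r)] [Fact (IsIdempotentElem r')] [Fact (IsIdempotentElem s)]
  [Fact (IsIdempotentElem s')]

lemma mem_span_iff_exists_sum_hmul_eq_one :
    r ∈ TwoSidedIdeal.span {q} ↔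
      ∃ (k : ℕ) (a : Fin k → Hand r q) (b : Fin k → Hand q r), ∑ i, hmul (a i) (b i) = 1 :=
  val_mem_span_iff_exists_sum_hmul (1 : Hand r r)

lemma leftMul_self_bijective (p r : C) [Fact (IsIdempotentElem p)] [Fact (IsIdempotentElem r)] :
    Function.Bijective (leftMul p r p) := by
  refine ⟨fun x y h => ?_, fun f => ⟨f 1, LinearMap.ext fun x => ?_⟩⟩
  · simpa only [leftMul_apply, hmul_one] using LinearMap.congr_fun h (1 : Hand p p)
  · rw [leftMul_apply, ← map_hmul, one_hmul]

lemma leftMul_injective_of_mem_span (hr : r ∈ TwoSidedIdeal.span {r'})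
    (hs : s ∈ TwoSidedIdeal.span {s'}) (h : Function.Injective (leftMul p r' s')) :
    Function.Injective (leftMul p r s) := by
  obtain ⟨k, a, b, hab⟩ := mem_span_iff_exists_sum_hmul_eq_one.1 hr
  obtain ⟨l, c, d, hcd⟩ := mem_span_iff_exists_sum_hmul_eq_one.1 hs
  refine (injective_iff_map_eq_zero _).2 fun x hx => ?_
  have hcorner (i : Fin k) (j : Fin l) : hmul (hmul (b i) x) (c j) = 0 := by
    refine (injective_iff_map_eq_zero _).1 h _ (LinearMap.ext fun y => ?_)
    rw [leftMul_apply, hmul_assoc, hmul_assoc, ← leftMul_apply x, hx]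
    exact hmul_zero _
  calc x
    _ = hmul (∑ i, hmul (a i) (b i)) (hmul x (∑ j, hmul (c j) (d j))) := by
      rw [hab, hcd, one_hmul, hmul_one]
    _ = ∑ i, ∑ j, hmul (a i) (hmul (hmul (hmul (b i) x) (c j)) (d j)) := by
      simp only [sum_hmul, hmul_sum, hmul_assoc]
      exact Finset.sum_comm
    _ = 0 := by simp only [hcorner, zero_hmul, hmul_zero, Finset.sum_const_zero]

lemma leftMul_surjective_of_mem_span (hr : r ∈ TwoSidedIdeal.span {r'})
    (hs : s ∈ TwoSidedIdeal.span {s'}) (h : Function.Surjective (leftMul p r' s')) :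
    Function.Surjective (leftMul p r s) := by
  obtain ⟨k, a, b, hab⟩ := mem_span_iff_exists_sum_hmul_eq_one.1 hr
  obtain ⟨l, c, d, hcd⟩ := mem_span_iff_exists_sum_hmul_eq_one.1 hs
  intro f
  choose x hx using fun (i : Fin k) (j : Fin l) =>
    h (leftMul p r' r (b i) ∘ₗ f ∘ₗ leftMul p s s' (c j))
  have hx' (i : Fin k) (j : Fin l) (y : Hand s' p) :
      hmul (x i j) y = hmul (b i) (f (hmul (c j) y)) :=
    LinearMap.congr_fun (hx i j) y
  refine ⟨∑ i, ∑ j, hmul (a i) (hmul (x i j) (d j)), LinearMap.ext fun y => ?_⟩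
  calc hmul (∑ i, ∑ j, hmul (a i) (hmul (x i j) (d j))) y
    _ = ∑ i, ∑ j, hmul (a i) (hmul (b i) (f (hmul (c j) (hmul (d j) y)))) := by
      simp only [sum_hmul, hmul_assoc, hx']
    _ = hmul (∑ i, hmul (a i) (b i)) (f (hmul (∑ j, hmul (c j) (d j)) y)) := by
      simp only [sum_hmul, hmul_assoc, hmul_sum, map_sum]
      exact Finset.sum_comm
    _ = f y := by rw [hab, hcd, one_hmul, one_hmul]

lemma leftMul_bijective_of_mem_span (hr : r ∈ TwoSidedIdeal.span {r'})
    (hs : s ∈ TwoSidedIdeal.span {s'}) (h : Function.Bijective (leftMul p r' s')) :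
    Function.Bijective (leftMul p r s) :=
  ⟨leftMul_injective_of_mem_span hr hs h.injective,
    leftMul_surjective_of_mem_span hr hs h.surjective⟩

lemma leftMul_bijective_of_right_mem_span (r : C) [Fact (IsIdempotentElem r)]
    (hs : s ∈ TwoSidedIdeal.span {p}) : Function.Bijective (leftMul p r s) :=
  leftMul_bijective_of_mem_span (TwoSidedIdeal.subset_span rfl) hs (leftMul_self_bijective p r)

end LeftMul

section Auslander

/-- The natural ring homomorphism `C → End_{pCp}(Cp)` given by left multiplication. -/
abbrev toEndCorner (p : C) [Fact (IsIdempotentElem p)] :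
    C →+* Module.End (Hand p p)ᵐᵒᵖ (Hand 1 p) :=
  Module.toModuleEnd (Hand p p)ᵐᵒᵖ (Hand 1 p)

/-- `(C, p)` is a right Auslander context: `C → End_{pCp}(Cp)` is an isomorphism. -/
def IsRightAuslander (p : C) [Fact (IsIdempotentElem p)] : Prop :=
  Function.Bijective (toEndCorner p)

variable {p q : C} [Fact (IsIdempotentElem p)] [Fact (IsIdempotentElem q)]

lemma isRightAuslander_iff_exists_ringHom :
    IsRightAuslander p ↔ ∃ α : C →+* Module.End (Hand p p)ᵐᵒᵖ (Hand 1 p),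
      (∀ (c : C) (x : Hand 1 p), (α c x).val = c * x.val) ∧ Function.Bijective α := by
  refine ⟨fun h => ⟨_, fun _ _ => rfl, h⟩, ?_⟩
  rintro ⟨α, hα, hbij⟩
  obtain rfl : α = toEndCorner p :=
    RingHom.ext fun c => LinearMap.ext fun x => Hand.ext (hα c x)
  exact hbij

lemma isRightAuslander_iff_leftMul_bijective :
    IsRightAuslander p ↔ Function.Bijective (leftMul p 1 1) := by
  have hval : Function.Bijective (val : Hand (1 : C) 1 → C) :=
    ⟨val_injective, fun c => ⟨compress 1 1 c, by rw [val_compress, one_mul, mul_one]⟩⟩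
  exact (Function.Bijective.of_comp_iff _ hval).symm

lemma IsRightAuslander.leftMul_bijective (h : IsRightAuslander p) (r s : C)
    [Fact (IsIdempotentElem r)] [Fact (IsIdempotentElem s)] :
    Function.Bijective (leftMul p r s) := by
  have hone (x : C) : x ∈ TwoSidedIdeal.span {(1 : C)} := by
    rw [← mul_one x]
    exact TwoSidedIdeal.mul_mem_left _ _ _ (TwoSidedIdeal.subset_span rfl)
  exact leftMul_bijective_of_mem_span (hone r) (hone s)
    (isRightAuslander_iff_leftMul_bijective.1 h)

lemma isRightAuslander_of_one_mem_span (h : 1 ∈ TwoSidedIdeal.span {p}) : IsRightAuslander p :=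
  isRightAuslander_iff_leftMul_bijective.2 (leftMul_bijective_of_right_mem_span 1 h)

lemma isRightAuslander_iff_leftMul_bijective_of_one_mem_span (h : 1 ∈ TwoSidedIdeal.span {q}) :
    IsRightAuslander p ↔ Function.Bijective (leftMul p q q) :=
  ⟨fun hp => hp.leftMul_bijective q q, fun hbij =>
    isRightAuslander_iff_leftMul_bijective.2 (leftMul_bijective_of_mem_span h h hbij)⟩

end Auslander

section GradeAuslander

variable {e : C} [Fact (IsIdempotentElem e)]

lemma val_mem_ker_cbarLin (x : Hand 1 e) : x.val ∈ LinearMap.ker (cbarLin e) := by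
  rw [ker_cbarLin]
  exact Submodule.subset_span ⟨x, rfl⟩

/-- Restriction of a right `C`-linear map `CeC → C` to an endomorphism of the right
`eCe`-module `Ce`. -/
def restrictCorner (f : LinearMap.ker (cbarLin e) →ₗ[Cᵐᵒᵖ] C) :
    Module.End (Hand e e)ᵐᵒᵖ (Hand 1 e) where
  toFun x := Hand.mk (f ⟨x.val, val_mem_ker_cbarLin x⟩) <| by
    have hx : op e • (⟨x.val, val_mem_ker_cbarLin x⟩ : LinearMap.ker (cbarLin e)) =
        ⟨x.val, val_mem_ker_cbarLin x⟩ := Subtype.ext (right_absorb x)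
    rw [one_mul, ← op_smul_eq_mul, ← f.map_smul, hx]
  map_add' x y := Hand.ext (f.map_add ⟨x.val, _⟩ ⟨y.val, _⟩)
  map_smul' a x := Hand.ext (f.map_smul (op a.unop.val) ⟨x.val, _⟩)

lemma restrictCorner_injective : Function.Injective (restrictCorner (e := e)) := by
  intro f g hfg
  refine (Submodule.linearMap_eq_iff_of_eq_span f g (ker_cbarLin e)).2 ?_
  rintro ⟨_, x, rfl⟩
  exact congrArg val (LinearMap.congr_fun hfg x)

lemma toEndCorner_val_apply (g : Module.End (Hand e e)ᵐᵒᵖ (Hand 1 e)) (x : Hand 1 e) :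
    toEndCorner e (g x).val = g * toEndCorner e x.val := by
  refine LinearMap.ext fun y => Hand.ext ?_
  let a : Hand e e := compress e e y.val
  have ha : a.val = e * y.val := by rw [val_compress, mul_assoc, right_absorb]
  have hmul_a (z : Hand 1 e) : (hmul z a).val = z.val * y.val := by
    rw [val_hmul, ha, ← mul_assoc, right_absorb]
  have hxy : hmul x a = x.val • y := Hand.ext (hmul_a x)
  calc (g x).val * y.val
    _ = (g (hmul x a)).val := by rw [map_hmul, hmul_a]
    _ = (g (x.val • y)).val := by rw [hxy]

lemma exists_toEndCorner_eq_mul (g : Module.End (Hand e e)ᵐᵒᵖ (Hand 1 e)) {t : C}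
    (ht : t ∈ LinearMap.ker (cbarLin e)) :
    ∃ z : C, toEndCorner e z = g * toEndCorner e t := by
  rw [ker_cbarLin] at ht
  induction ht using Submodule.span_induction with
  | mem _ hx =>
    obtain ⟨x, rfl⟩ := hx
    exact ⟨_, toEndCorner_val_apply g x⟩
  | zero => exact ⟨0, by rw [map_zero, mul_zero]⟩
  | add t₁ t₂ _ _ h₁ h₂ =>
    obtain ⟨z₁, hz₁⟩ := h₁
    obtain ⟨z₂, hz₂⟩ := h₂
    exact ⟨z₁ + z₂, by rw [map_add, map_add, mul_add, hz₁, hz₂]⟩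
  | smul c t _ h =>
    obtain ⟨z, hz⟩ := h
    exact ⟨z * c.unop, by rw [smul_eq_mul_unop, map_mul, map_mul, hz, mul_assoc]⟩

lemma restrictCorner_surjective (hinj : Function.Injective (toEndCorner e)) :
    Function.Surjective (restrictCorner (e := e)) := by
  intro g
  -- `F t` is the unique solution `z` of `toEndCorner e z = g * toEndCorner e t`; its uniqueness
  -- makes `F` linear.
  choose F hF using fun t : LinearMap.ker (cbarLin e) => exists_toEndCorner_eq_mul g t.2
  let f : LinearMap.ker (cbarLin e) →ₗ[Cᵐᵒᵖ] C :=
    { toFun := F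
      map_add' := fun t₁ t₂ => hinj (by
        rw [map_add, hF, hF, hF, Submodule.coe_add, map_add, mul_add])
      map_smul' := fun c t => hinj (by
        rw [RingHom.id_apply, smul_eq_mul_unop, map_mul, hF, hF, Submodule.coe_smul,
          smul_eq_mul_unop, map_mul, mul_assoc]) }
  refine ⟨f, LinearMap.ext fun x => Hand.ext (hinj ?_)⟩
  exact (hF ⟨x.val, val_mem_ker_cbarLin x⟩).trans (toEndCorner_val_apply g x).symm

lemma two_le_rgrade_cBar_iff_isRightAuslander : 2 ≤ rgrade C (CBar e) ↔ IsRightAuslander e := by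
  rw [two_le_rgrade_iff_bijective_domRestrict_ker (π := cbarLin e) (cbarMk_surjective e)]
  set mulOnIdeal : C → (LinearMap.ker (cbarLin e) →ₗ[Cᵐᵒᵖ] C) := fun c =>
    (Module.toModuleEnd Cᵐᵒᵖ C c).domRestrict (LinearMap.ker (cbarLin e))
  have hcomp : ⇑(toEndCorner e) = restrictCorner ∘ mulOnIdeal := rfl
  rw [IsRightAuslander, hcomp]
  refine ⟨fun h => ?_, fun h => ⟨h.injective.of_comp, ?_⟩⟩
  · have hinj := restrictCorner_injective.comp h.injective
    exact ⟨hinj, (restrictCorner_surjective hinj).comp h.surjective⟩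
  · exact h.surjective.of_comp_left restrictCorner_injective

end GradeAuslander

section RightModules

variable {R : Type} [Ring R] {X : Type} [AddCommGroup X] [Module Rᵐᵒᵖ X]

/-- The right-module version of `LinearMap.toSpanSingleton`: the map `r ↦ x r`. -/
def toRightSpanSingleton (x : X) : R →ₗ[Rᵐᵒᵖ] X :=
  LinearMap.toSpanSingleton Rᵐᵒᵖ X x ∘ₗ (MulOpposite.opLinearEquiv Rᵐᵒᵖ).toLinearMap

@[simp] lemma toRightSpanSingleton_apply (x : X) (r : R) : toRightSpanSingleton x r = op r • x :=
  rfl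

lemma isRGenerator_iff_exists_sum_eq_one :
    IsRGenerator R X ↔
      ∃ (k : ℕ) (l : Fin k → X →ₗ[Rᵐᵒᵖ] R) (x : Fin k → X), ∑ i, l i (x i) = 1 := by
  constructor
  · rintro ⟨k, π, σ, hπσ⟩
    refine ⟨k, fun i => π ∘ₗ LinearMap.single Rᵐᵒᵖ (fun _ => X) i, σ 1, ?_⟩
    simp only [LinearMap.comp_apply, ← map_sum, LinearMap.single_apply, Finset.univ_sum_single]
    exact LinearMap.congr_fun hπσ 1
  · rintro ⟨k, l, x, hlx⟩
    refine ⟨k, ∑ i, l i ∘ₗ LinearMap.proj i, LinearMap.pi fun i => toRightSpanSingleton (x i),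
      LinearMap.ext fun r => ?_⟩
    simp [← Finset.sum_mul, hlx]

lemma finite_and_projective_iff_exists_dual_basis :
    Module.Finite Rᵐᵒᵖ X ∧ Module.Projective Rᵐᵒᵖ X ↔
      ∃ (k : ℕ) (x : Fin k → X) (l : Fin k → X →ₗ[Rᵐᵒᵖ] R), ∀ y, ∑ i, op (l i y) • x i = y := by
  constructor
  · rintro ⟨_, _⟩
    obtain ⟨k, π, σ, -, -, hπσ⟩ := Module.Finite.exists_comp_eq_id_of_projective Rᵐᵒᵖ X
    refine ⟨k, fun i => π fun j => if i = j then 1 else 0, fun i =>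
      (MulOpposite.opLinearEquiv Rᵐᵒᵖ).symm.toLinearMap ∘ₗ LinearMap.proj i ∘ₗ σ, fun y => ?_⟩
    exact (LinearMap.pi_apply_eq_sum_univ π (σ y)).symm.trans (LinearMap.congr_fun hπσ y)
  · rintro ⟨k, x, l, hxl⟩
    let π := Fintype.linearCombination Rᵐᵒᵖ x
    let σ : X →ₗ[Rᵐᵒᵖ] Fin k → Rᵐᵒᵖ :=
      LinearMap.pi fun i => (MulOpposite.opLinearEquiv Rᵐᵒᵖ).toLinearMap ∘ₗ l i
    have hπσ : π ∘ₗ σ = LinearMap.id := LinearMap.ext hxl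
    exact ⟨.of_surjective π (LinearMap.surjective_of_comp_eq_id _ _ hπσ), .of_split σ π hπσ⟩

end RightModules

section Corners

variable {p q : C} [Fact (IsIdempotentElem p)] [Fact (IsIdempotentElem q)]

lemma IsRightAuslander.isRGenerator_iff_mem_span (hp : IsRightAuslander p) :
    IsRGenerator (Hand p p) (Hand q p) ↔ p ∈ TwoSidedIdeal.span {q} := by
  rw [isRGenerator_iff_exists_sum_eq_one, mem_span_iff_exists_sum_hmul_eq_one]
  constructor
  · rintro ⟨k, l, x, hlx⟩
    choose a ha using fun i => (hp.leftMul_bijective p q).surjective (l i)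
    obtain rfl : (fun i => leftMul p p q (a i)) = l := funext ha
    exact ⟨k, a, x, hlx⟩
  · rintro ⟨k, a, x, hax⟩
    exact ⟨k, fun i => leftMul p p q (a i), x, hax⟩

lemma IsRightAuslander.finite_and_projective_iff_mem_span (hq : IsRightAuslander q) :
    Module.Finite (Hand q q)ᵐᵒᵖ (Hand p q) ∧ Module.Projective (Hand q q)ᵐᵒᵖ (Hand p q) ↔
      p ∈ TwoSidedIdeal.span {q} := by
  rw [finite_and_projective_iff_exists_dual_basis, mem_span_iff_exists_sum_hmul_eq_one]
  have key {k : ℕ} (x : Fin k → Hand p q) (a : Fin k → Hand q p) :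
      (∀ y : Hand p q, ∑ i, hmul (x i) (hmul (a i) y) = y) ↔ ∑ i, hmul (x i) (a i) = 1 := by
    rw [← (hq.leftMul_bijective p p).injective.eq_iff, LinearMap.ext_iff]
    simp only [leftMul_apply, sum_hmul, hmul_assoc, one_hmul]
  constructor
  · rintro ⟨k, x, l, hxl⟩
    choose a ha using fun i => (hq.leftMul_bijective q p).surjective (l i)
    obtain rfl : (fun i => leftMul q q p (a i)) = l := funext ha
    exact ⟨k, x, a, (key x a).1 hxl⟩
  · rintro ⟨k, x, a, hxa⟩
    exact ⟨k, x, fun i => leftMul q q p (a i), (key x a).2 hxa⟩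

end Corners

section Wedderburn

instance (R : Type) [Ring R] (P : Type) [AddCommGroup P] [Module Rᵐᵒᵖ P] :
    SMulCommClass R (Module.End Rᵐᵒᵖ P)ᵐᵒᵖ (P →ₗ[Rᵐᵒᵖ] R) :=
  ⟨fun _ _ _ => rfl⟩

lemma isWedderburnProjective_iff (R : Type) [Ring R] (P : Type) [AddCommGroup P] [Module Rᵐᵒᵖ P] :
    IsWedderburnProjective R P ↔
      (Module.Finite Rᵐᵒᵖ P ∧ Module.Projective Rᵐᵒᵖ P) ∧
        Function.Bijective
          (Module.toModuleEnd (Module.End Rᵐᵒᵖ P)ᵐᵒᵖ (S := R) (P →ₗ[Rᵐᵒᵖ] R)) := by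
  rw [IsWedderburnProjective, and_assoc]
  refine and_congr_right fun _ => and_congr_right fun _ => ⟨?_, fun h => ⟨_, fun _ _ _ => rfl, h⟩⟩
  rintro ⟨Φ, hΦ, hbij⟩
  obtain rfl : Φ = Module.toModuleEnd (Module.End Rᵐᵒᵖ P)ᵐᵒᵖ (P →ₗ[Rᵐᵒᵖ] R) :=
    RingHom.ext fun r => LinearMap.ext fun l => LinearMap.ext (hΦ r l)
  exact hbij

lemma bijective_toModuleEnd_congr {R S T M N : Type*} [Ring R] [Ring S] [Ring T]
    [AddCommGroup M] [Module S M] [Module R M] [SMulCommClass R S M]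
    [AddCommGroup N] [Module T N] [Module R N] [SMulCommClass R T N]
    (σ : S ≃+* T) (φ : M ≃+ N) (hσ : ∀ (s : S) (m : M), φ (s • m) = σ s • φ m)
    (hR : ∀ (r : R) (m : M), φ (r • m) = r • φ m) :
    Function.Bijective (Module.toModuleEnd S (S := R) M) ↔
      Function.Bijective (Module.toModuleEnd T (S := R) N) := by
  have : RingHomInvPair (σ : S →+* T) (σ.symm : T →+* S) := RingHomInvPair.of_ringEquiv σ
  have : RingHomInvPair (σ.symm : T →+* S) (σ : S →+* T) := RingHomInvPair.symm _ _
  let φ' : M ≃ₛₗ[(σ : S →+* T)] N := { φ with map_smul' := hσ }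
  have hconj : ⇑(Module.toModuleEnd T (S := R) N) =
      φ'.conjRingEquiv ∘ Module.toModuleEnd S (S := R) M := by
    funext r
    refine LinearMap.ext fun n => ?_
    obtain ⟨m, rfl⟩ := φ.surjective n
    calc r • φ m = φ (r • m) := (hR r m).symm
      _ = φ' (r • φ'.symm (φ' m)) := by rw [φ'.symm_apply_apply]; rfl
  rw [hconj]
  exact (EquivLike.comp_bijective _ φ'.conjRingEquiv).symm

variable {p q : C} [Fact (IsIdempotentElem p)] [Fact (IsIdempotentElem q)]

/-- The isomorphism `pCp ≅ End_{qCq}(pCq)` given by left multiplication, for `p ∈ CqC`. -/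
def cornerEquivEnd (h : p ∈ TwoSidedIdeal.span {q}) :
    Hand p p ≃+* Module.End (Hand q q)ᵐᵒᵖ (Hand p q) :=
  .ofBijective (Module.toModuleEnd (Hand q q)ᵐᵒᵖ (Hand p q))
    (leftMul_bijective_of_right_mem_span p h)

lemma IsRightAuslander.isWedderburnProjective_iff_leftMul_bijective (hq : IsRightAuslander q)
    (h : p ∈ TwoSidedIdeal.span {q}) :
    IsWedderburnProjective (Hand q q) (Hand p q) ↔ Function.Bijective (leftMul p q q) := by
  rw [isWedderburnProjective_iff, and_iff_right (hq.finite_and_projective_iff_mem_span.2 h),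
    ← bijective_toModuleEnd_congr (cornerEquivEnd h).op
      (AddEquiv.ofBijective (leftMul q q p) (leftMul_bijective_of_right_mem_span q h))]
  · rfl
  · exact fun a x => LinearMap.ext fun y => hmul_assoc x a.unop y
  · exact fun b x => LinearMap.ext fun y => hmul_assoc b x y

end Wedderburn

section Trace

variable {e : C} [Fact (IsIdempotentElem e)]

/-- The quotient map `C → C/CeC` restricted to the complementary corner `(1 - e)C(1 - e)`. -/
def cornerToCBar (e : C) [Fact (IsIdempotentElem e)] : Hand (1 - e) (1 - e) →+* CBar e where
  toFun b := cbarMk e b.val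
  map_zero' := map_zero _
  map_add' b c := map_add (cbarMk e) b.val c.val
  map_mul' b c := map_mul (cbarMk e) b.val c.val
  map_one' := by
    rw [val_one, map_sub, map_one, (cbarMk_eq_zero_iff e e).2 (TwoSidedIdeal.subset_span rfl),
      sub_zero]

lemma cornerToCBar_surjective : Function.Surjective (cornerToCBar e) := by
  have hone : cbarMk e (1 - e) = 1 := (cornerToCBar e).map_one
  intro x
  obtain ⟨c, rfl⟩ := cbarMk_surjective e x
  refine ⟨compress (1 - e) (1 - e) c, ?_⟩
  change cbarMk e ((1 - e) * c * (1 - e)) = cbarMk e c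
  rw [map_mul, map_mul, hone, one_mul, mul_one]

lemma IsRightAuslander.traceIdeal_eq_ker (h : IsRightAuslander (1 - e)) :
    traceIdeal (Hand (1 - e) (1 - e)) (Hand e (1 - e)) = TwoSidedIdeal.ker (cornerToCBar e) := by
  refine le_antisymm (TwoSidedIdeal.span_le.2 ?_) fun b hb => ?_
  · rintro _ ⟨l, x, rfl⟩
    obtain ⟨a, rfl⟩ := (h.leftMul_bijective (1 - e) e).surjective l
    exact (TwoSidedIdeal.mem_ker _).2 ((cbarMk_eq_zero_iff e _).2 (val_hmul_mem_span a x))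
  · have hb' : b.val ∈ TwoSidedIdeal.span {e} :=
      (cbarMk_eq_zero_iff e _).1 ((TwoSidedIdeal.mem_ker _).1 hb)
    obtain ⟨k, a, x, rfl⟩ := (val_mem_span_iff_exists_sum_hmul b).1 hb'
    exact sum_mem fun i _ =>
      TwoSidedIdeal.subset_span ⟨leftMul (1 - e) (1 - e) e (a i), x i, rfl⟩

lemma IsRightAuslander.nonempty_cBar_ringEquiv (h : IsRightAuslander (1 - e)) :
    Nonempty (CBar e ≃+*
      (traceIdeal (Hand (1 - e) (1 - e)) (Hand e (1 - e))).ringCon.Quotient) := by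
  rw [h.traceIdeal_eq_ker]
  exact ⟨(RingCon.quotientKerEquivOfSurjective (cornerToCBar e) cornerToCBar_surjective).symm⟩

end Trace

/-- For a Morita context `(C, e)` with `A = eCe`, `B = e'Ce'`,
`M = e'Ce`, `N = eCe'`, the following are equivalent:
(1) `(C, e)` is a Wedderburn context: `C̄' = C/Ce'C = 0` and `grade_C(C̄) ≥ 2`;
(2) `(C, e)` is a right Auslander context (the natural map `C → End_A(Ce)`,
`Ce ≅ M ⊕ A`, is an isomorphism) and `M` is an `A`-generator;
(3) `(C, e')` is a right Auslander context (the natural map `C → End_B(Ce')`,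
`Ce' ≅ N ⊕ B`, is an isomorphism) and `N` is a Wedderburn projective over `B`.
Moreover in case (3), `C̄ ≅ B/τ_N(B)`, the quotient of `B` by the trace ideal of `N`. -/
theorem wedderburn_context_characterizations
    (C : Type) [Ring C] (e : C) [Fact (IsIdempotentElem e)] :
    ((Subsingleton (CBar (1 - e)) ∧ 2 ≤ rgrade C (CBar e)) ↔
      ((∃ α : C →+* Module.End (Hand e e)ᵐᵒᵖ (Hand (1 : C) e),
          (∀ (c : C) (x : Hand (1 : C) e), (α c x).val = c * x.val)
          ∧ Function.Bijective α)
        ∧ IsRGenerator (Hand e e) (Hand (1 - e) e)))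
    ∧ ((Subsingleton (CBar (1 - e)) ∧ 2 ≤ rgrade C (CBar e)) ↔
      ((∃ α' : C →+* Module.End (Hand (1 - e) (1 - e))ᵐᵒᵖ (Hand (1 : C) (1 - e)),
          (∀ (c : C) (x : Hand (1 : C) (1 - e)), (α' c x).val = c * x.val)
          ∧ Function.Bijective α')
        ∧ IsWedderburnProjective (Hand (1 - e) (1 - e)) (Hand e (1 - e))))
    ∧ (((∃ α' : C →+* Module.End (Hand (1 - e) (1 - e))ᵐᵒᵖ (Hand (1 : C) (1 - e)),
          (∀ (c : C) (x : Hand (1 : C) (1 - e)), (α' c x).val = c * x.val)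
          ∧ Function.Bijective α')
        ∧ IsWedderburnProjective (Hand (1 - e) (1 - e)) (Hand e (1 - e))) →
      Nonempty (CBar e ≃+*
        (traceIdeal (Hand (1 - e) (1 - e)) (Hand e (1 - e))).ringCon.Quotient)) := by
  rw [subsingleton_cBar_one_sub_iff_mem_span, two_le_rgrade_cBar_iff_isRightAuslander,
    ← isRightAuslander_iff_exists_ringHom, ← isRightAuslander_iff_exists_ringHom]
  refine ⟨?_, ⟨?_, ?_⟩, fun h => h.1.nonempty_cBar_ringEquiv⟩
  · rw [and_comm]
    exact and_congr_right fun he => he.isRGenerator_iff_mem_span.symm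
  · rintro ⟨hmem, he⟩
    have hone := one_mem_span_one_sub_of_mem hmem
    have he' : IsRightAuslander (1 - e) := isRightAuslander_of_one_mem_span hone
    exact ⟨he', (he'.isWedderburnProjective_iff_leftMul_bijective hmem).2
      (he.leftMul_bijective (1 - e) (1 - e))⟩
  · rintro ⟨he', hN⟩
    have hmem : e ∈ TwoSidedIdeal.span {1 - e} :=
      he'.finite_and_projective_iff_mem_span.1 ⟨hN.1, hN.2.1⟩
    have hone := one_mem_span_one_sub_of_mem hmem
    exact ⟨hmem, (isRightAuslander_iff_leftMul_bijective_of_one_mem_span hone).2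
      ((he'.isWedderburnProjective_iff_leftMul_bijective hmem).1 hN)⟩

end MoritaHochschild
end
end
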